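/- Let n ≥ 1 and μ ∈ (0, 2). For ξ ∈ ℝⁿ \ {0} write r := |ξ| and b(r) := √(r² - (μ²/4) log²(1+r)), and define χ(t,ξ) := (1+r)^{-μt/2} (1/b(r)) sin(γ t r), where γ := √(4-μ²)/2. Then there exist constants C > 0, D > 0 and t₀ > 0, depending only on n and μ, such that for all t ≥ t₀: C t^{2-n} ≤ ∫_{|ξ| ≤ 1} |χ(t,ξ)|² dξ ≤ D t^{2-n}. -/

import Mathlib

open MeasureTheory

/-!
On the unit ball `(1 + r) ^ (-(μ t) / 2)` lies between `exp (-(μ t r) / 2)` and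
`exp (-(μ t r) / 4)`, and `b(r)` is comparable to `r` because `log (1 + r) ≤ r` and `μ < 2`. Hence
`|χ(t, ξ)|² ≲ t² exp (-(μ / 2) |t ξ|)`, and the substitution `ξ ↦ t ξ` turns the integral of the
right-hand side into a multiple of `t ^ (2 - n)`. Conversely `|sin x| ≥ 2 |x| / π` for
`|x| ≤ π / 2`, so `|χ(t, ξ)|² ≳ t²` on a ball of radius comparable to `1 / t`, whose volume is a
multiple of `t ^ (-n)`.
-/

section HaarMeasure

open Module Metric

variable {E : Type*} [NormedAddCommGroup E] [NormedSpace ℝ E] [FiniteDimensional ℝ E]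
  [MeasurableSpace E] [BorelSpace E] (ν : Measure E) [ν.IsAddHaarMeasure]

theorem integrable_exp_neg_mul_norm {c : ℝ} (hc : 0 < c) :
    Integrable (fun x : E ↦ Real.exp (-(c * ‖x‖))) ν := by
  rcases subsingleton_or_nontrivial E with _ | _
  · exact .of_finite
  · refine (integrable_fun_norm_addHaar ν (f := fun y ↦ Real.exp (-(c * y)))).2 ?_
    have h_dim : (-1 : ℝ) < (finrank ℝ E - 1 : ℕ) := neg_one_lt_zero.trans_le (Nat.cast_nonneg _)
    refine (integrableOn_rpow_mul_exp_neg_mul_rpow h_dim one_pos hc).congr_fun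
      (fun y _ ↦ ?_) measurableSet_Ioi
    simp [Real.rpow_natCast]

theorem setIntegral_le_of_le_comp_smul {f g : E → ℝ} {s : Set E} {t : ℝ} (ht : 0 < t)
    (hs : MeasurableSet s) (hg : Integrable g ν) (hg_nonneg : ∀ x, 0 ≤ g x)
    (hf_nonneg : ∀ x ∈ s, 0 ≤ f x) (hfg : ∀ x ∈ s, f x ≤ g (t • x)) :
    ∫ x in s, f x ∂ν ≤ (t ^ finrank ℝ E)⁻¹ * ∫ x, g x ∂ν := by
  have hgt : Integrable (fun x ↦ g (t • x)) ν := hg.comp_smul ht.ne'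
  calc
    ∫ x in s, f x ∂ν ≤ ∫ x in s, g (t • x) ∂ν :=
      integral_mono_of_nonneg (ae_restrict_of_forall_mem hs hf_nonneg) hgt.integrableOn
        (ae_restrict_of_forall_mem hs hfg)
    _ ≤ ∫ x, g (t • x) ∂ν := setIntegral_le_integral hgt (ae_of_all _ fun _ ↦ hg_nonneg _)
    _ = (t ^ finrank ℝ E)⁻¹ * ∫ x, g x ∂ν :=
      Measure.integral_comp_smul_of_nonneg ν g t (hR := ht.le)

theorem mul_pow_mul_measureReal_le_setIntegral_closedBall [Nontrivial E] {f : E → ℝ} {c δ R : ℝ}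
    (hδ : 0 ≤ δ) (hδR : δ ≤ R) (hf : IntegrableOn f (closedBall 0 R) ν)
    (hf_nonneg : ∀ x, 0 ≤ f x) (hcf : ∀ x, x ≠ 0 → ‖x‖ ≤ δ → c ≤ f x) :
    c * (δ ^ finrank ℝ E * ν.real (closedBall 0 1)) ≤ ∫ x in closedBall 0 R, f x ∂ν := by
  have h_subset : closedBall (0 : E) δ \ {0} ⊆ closedBall 0 R :=
    Set.sdiff_subset.trans (closedBall_subset_closedBall hδR)
  have h_volume : ν.real (closedBall (0 : E) δ \ {0}) =
      δ ^ finrank ℝ E * ν.real (closedBall 0 1) := by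
    rw [measureReal_def, measure_sdiff_null (measure_singleton 0), ← measureReal_def,
      Measure.addHaar_real_closedBall' ν 0 hδ]
  calc
    c * (δ ^ finrank ℝ E * ν.real (closedBall 0 1))
        = c * ν.real (closedBall (0 : E) δ \ {0}) := by rw [h_volume]
    _ ≤ ∫ x in closedBall 0 δ \ {0}, f x ∂ν :=
      setIntegral_ge_of_const_le_real (measurableSet_closedBall.diff (measurableSet_singleton 0))
        (measure_ne_top_of_subset Set.sdiff_subset measure_closedBall_lt_top.ne)
        (fun x hx ↦ hcf x hx.2 (mem_closedBall_zero_iff.1 hx.1)) (hf.mono_set h_subset)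
    _ ≤ ∫ x in closedBall 0 R, f x ∂ν :=
      setIntegral_mono_set hf (ae_of_all _ hf_nonneg) h_subset.eventuallyLE

end HaarMeasure

section OneAdd

variable {r s : ℝ}

theorem log_one_add_le_self (hr : 0 ≤ r) : Real.log (1 + r) ≤ r := by
  linarith [Real.log_le_sub_one_of_pos (by linarith : 0 < 1 + r)]

theorem half_le_log_one_add (hr : 0 ≤ r) (hr' : r ≤ 1) : r / 2 ≤ Real.log (1 + r) :=
  calc
    r / 2 ≤ 2 * r / (r + 2) := by
      rw [div_le_div_iff₀ two_pos (by linarith)]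
      nlinarith
    _ ≤ Real.log (1 + r) := Real.le_log_one_add_of_nonneg hr

theorem exp_neg_mul_le_one_add_rpow_neg (hr : 0 ≤ r) (hs : 0 ≤ s) :
    Real.exp (-(s * r)) ≤ (1 + r) ^ (-s) := by
  rw [Real.rpow_def_of_pos (by linarith), Real.exp_le_exp]
  linarith [mul_le_mul_of_nonneg_left (log_one_add_le_self hr) hs]

theorem one_add_rpow_neg_le_exp_neg_mul (hr : 0 ≤ r) (hr' : r ≤ 1) (hs : 0 ≤ s) :
    (1 + r) ^ (-s) ≤ Real.exp (-(s * (r / 2))) := by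
  rw [Real.rpow_def_of_pos (by linarith), Real.exp_le_exp]
  linarith [mul_le_mul_of_nonneg_left (half_le_log_one_add hr hr') hs]

end OneAdd

/-- The function `b(r)`, the frequency of oscillation of the Fourier modes `|ξ| = r`. -/
noncomputable def logDampedFreq (μ r : ℝ) : ℝ :=
  √(r ^ 2 - μ ^ 2 / 4 * Real.log (1 + r) ^ 2)

/-- The profile `χ(t, ξ)` as a function of `r = |ξ|`, with a free parameter `γ`. At `r = 0` it takes
the junk value `0`, not the limit of its values as `r → 0`. -/
noncomputable def logDampedProfile (μ γ t r : ℝ) : ℝ :=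
  (1 + r) ^ (-(μ * t) / 2) * (1 / logDampedFreq μ r) * Real.sin (γ * t * r)

section Profile

variable {μ γ t r : ℝ}

theorem logDampedFreq_nonneg : 0 ≤ logDampedFreq μ r := Real.sqrt_nonneg _

theorem logDampedFreq_le_self (hr : 0 ≤ r) : logDampedFreq μ r ≤ r :=
  (Real.sqrt_le_left hr).2 (sub_le_self _ (by positivity))

theorem sqrt_mul_le_logDampedFreq (hr : 0 ≤ r) : √(1 - μ ^ 2 / 4) * r ≤ logDampedFreq μ r := by
  have h_log : Real.log (1 + r) ^ 2 ≤ r ^ 2 :=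
    pow_le_pow_left₀ (Real.log_nonneg (by linarith)) (log_one_add_le_self hr) 2
  calc
    √(1 - μ ^ 2 / 4) * r = √((1 - μ ^ 2 / 4) * r ^ 2) := by
      rw [Real.sqrt_mul' _ (sq_nonneg r), Real.sqrt_sq hr]
    _ ≤ logDampedFreq μ r := Real.sqrt_le_sqrt (by
      linarith [mul_le_mul_of_nonneg_left h_log (by positivity : 0 ≤ μ ^ 2 / 4)])

theorem sqrt_one_sub_sq_div_four_pos (hμ : 0 ≤ μ) (hμ' : μ < 2) : 0 < √(1 - μ ^ 2 / 4) :=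
  Real.sqrt_pos.2 (by nlinarith)

theorem abs_logDampedProfile (hr : 0 ≤ r) :
    |logDampedProfile μ γ t r| =
      (1 + r) ^ (-(μ * t / 2)) * (|Real.sin (γ * t * r)| / logDampedFreq μ r) := by
  rw [logDampedProfile, abs_mul, abs_mul, abs_of_nonneg (by positivity),
    abs_of_nonneg (one_div_nonneg.2 logDampedFreq_nonneg), neg_div]
  ring

theorem abs_sin_div_logDampedFreq_le (hμ : 0 ≤ μ) (hμ' : μ < 2) (ht : 0 ≤ t) (hr : 0 ≤ r) :
    |Real.sin (γ * t * r)| / logDampedFreq μ r ≤ |γ| / √(1 - μ ^ 2 / 4) * t := by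
  have hκ := sqrt_one_sub_sq_div_four_pos hμ hμ'
  refine div_le_of_le_mul₀ logDampedFreq_nonneg (by positivity) ?_
  calc
    |Real.sin (γ * t * r)| ≤ |γ * t * r| := Real.abs_sin_le_abs
    _ = |γ| / √(1 - μ ^ 2 / 4) * t * (√(1 - μ ^ 2 / 4) * r) := by
      rw [abs_mul, abs_mul, abs_of_nonneg ht, abs_of_nonneg hr,
        mul_mul_mul_comm, div_mul_cancel₀ _ hκ.ne', mul_assoc]
    _ ≤ |γ| / √(1 - μ ^ 2 / 4) * t * logDampedFreq μ r := by
      gcongr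
      exact sqrt_mul_le_logDampedFreq hr

theorem le_abs_sin_div_logDampedFreq (hμ : 0 ≤ μ) (hμ' : μ < 2) (ht : 0 ≤ t) (hr : 0 < r)
    (hγ : |γ| * (t * r) ≤ Real.pi / 2) :
    2 / Real.pi * |γ| * t ≤ |Real.sin (γ * t * r)| / logDampedFreq μ r := by
  have h_freq : 0 < logDampedFreq μ r :=
    (mul_pos (sqrt_one_sub_sq_div_four_pos hμ hμ') hr).trans_le (sqrt_mul_le_logDampedFreq hr.le)
  have h_abs : |γ * t * r| = |γ| * (t * r) := by
    rw [abs_mul, abs_mul, abs_of_nonneg ht, abs_of_pos hr, mul_assoc]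
  rw [le_div_iff₀ h_freq]
  calc
    2 / Real.pi * |γ| * t * logDampedFreq μ r ≤ 2 / Real.pi * |γ| * t * r := by
      gcongr
      exact logDampedFreq_le_self hr.le
    _ = 2 / Real.pi * |γ * t * r| := by rw [h_abs]; ring
    _ ≤ |Real.sin (γ * t * r)| := Real.mul_abs_le_abs_sin (h_abs.trans_le hγ)

theorem sq_abs_logDampedProfile_le (hμ : 0 ≤ μ) (hμ' : μ < 2) (ht : 0 ≤ t) (hr : 0 ≤ r)
    (hr' : r ≤ 1) :
    |logDampedProfile μ γ t r| ^ 2 ≤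
      (|γ| / √(1 - μ ^ 2 / 4) * t) ^ 2 * Real.exp (-(μ / 2 * (t * r))) :=
  calc
    |logDampedProfile μ γ t r| ^ 2
        ≤ (Real.exp (-(μ * t / 2 * (r / 2))) * (|γ| / √(1 - μ ^ 2 / 4) * t)) ^ 2 := by
      have h_nonneg := div_nonneg (abs_nonneg (Real.sin (γ * t * r)))
        (logDampedFreq_nonneg (μ := μ) (r := r))
      rw [abs_logDampedProfile hr]
      gcongr
      · exact one_add_rpow_neg_le_exp_neg_mul hr hr' (by positivity)
      · exact abs_sin_div_logDampedFreq_le hμ hμ' ht hr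
    _ = (|γ| / √(1 - μ ^ 2 / 4) * t) ^ 2 * Real.exp (-(μ / 2 * (t * r))) := by
      rw [mul_pow, ← Real.exp_nat_mul, mul_comm]
      congr 2
      push_cast
      ring

theorem le_sq_abs_logDampedProfile (hμ : 0 ≤ μ) (hμ' : μ < 2) (ht : 0 ≤ t) (hr : 0 < r)
    (htr : t * r ≤ 1) (hγ : |γ| * (t * r) ≤ 1) :
    (Real.exp (-(μ / 2)) * (2 / Real.pi * |γ| * t)) ^ 2 ≤ |logDampedProfile μ γ t r| ^ 2 := by
  have h_damping : Real.exp (-(μ / 2)) ≤ (1 + r) ^ (-(μ * t / 2)) :=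
    calc
      Real.exp (-(μ / 2)) ≤ Real.exp (-(μ * t / 2 * r)) :=
        Real.exp_le_exp.2 (by linarith [mul_le_mul_of_nonneg_left htr hμ])
      _ ≤ (1 + r) ^ (-(μ * t / 2)) := exp_neg_mul_le_one_add_rpow_neg hr.le (by positivity)
  rw [abs_logDampedProfile hr.le]
  gcongr
  exact le_abs_sin_div_logDampedFreq hμ hμ' ht hr (hγ.trans Real.one_le_pi_div_two)

theorem measurable_logDampedProfile : Measurable (logDampedProfile μ γ t) := by
  unfold logDampedProfile logDampedFreq
  fun_prop

end Profile

section ProfileIntegral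

open Module Metric

variable {E : Type*} [NormedAddCommGroup E] [NormedSpace ℝ E] [FiniteDimensional ℝ E]
  [MeasurableSpace E] [BorelSpace E] (ν : Measure E) [ν.IsAddHaarMeasure] {μ t : ℝ} (γ : ℝ)

theorem integrableOn_sq_abs_logDampedProfile (hμ : 0 ≤ μ) (hμ' : μ < 2) (ht : 0 ≤ t) :
    IntegrableOn (fun ξ : E ↦ |logDampedProfile μ γ t ‖ξ‖| ^ 2) (closedBall 0 1) ν := by
  refine Measure.integrableOn_of_bounded measure_closedBall_lt_top.ne
    ((measurable_logDampedProfile.comp measurable_norm).abs.pow_const 2).aestronglyMeasurable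
    (M := (|γ| / √(1 - μ ^ 2 / 4) * t) ^ 2) ?_
  refine ae_restrict_of_forall_mem measurableSet_closedBall fun ξ hξ ↦ ?_
  calc
    ‖|logDampedProfile μ γ t ‖ξ‖| ^ 2‖ = |logDampedProfile μ γ t ‖ξ‖| ^ 2 :=
      Real.norm_of_nonneg (by positivity)
    _ ≤ (|γ| / √(1 - μ ^ 2 / 4) * t) ^ 2 * Real.exp (-(μ / 2 * (t * ‖ξ‖))) :=
      sq_abs_logDampedProfile_le hμ hμ' ht (norm_nonneg ξ) (mem_closedBall_zero_iff.1 hξ)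
    _ ≤ (|γ| / √(1 - μ ^ 2 / 4) * t) ^ 2 :=
      mul_le_of_le_one_right (by positivity)
        (Real.exp_le_one_iff.2 (neg_nonpos.2 (by positivity)))

theorem setIntegral_sq_abs_logDampedProfile_le (hμ : 0 < μ) (hμ' : μ < 2) (ht : 0 < t) :
    ∫ ξ in closedBall (0 : E) 1, |logDampedProfile μ γ t ‖ξ‖| ^ 2 ∂ν ≤
      (|γ| / √(1 - μ ^ 2 / 4)) ^ 2 * (∫ x, Real.exp (-(μ / 2 * ‖x‖)) ∂ν) *
        (t ^ 2 * (t ^ finrank ℝ E)⁻¹) := by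
  set K := |γ| / √(1 - μ ^ 2 / 4)
  calc
    ∫ ξ in closedBall (0 : E) 1, |logDampedProfile μ γ t ‖ξ‖| ^ 2 ∂ν
        ≤ (t ^ finrank ℝ E)⁻¹ * ∫ x, (K * t) ^ 2 * Real.exp (-(μ / 2 * ‖x‖)) ∂ν := by
      refine setIntegral_le_of_le_comp_smul ν ht measurableSet_closedBall
        ((integrable_exp_neg_mul_norm ν (half_pos hμ)).const_mul _)
        (fun _ ↦ by positivity) (fun _ _ ↦ by positivity) fun ξ hξ ↦ ?_
      rw [norm_smul, Real.norm_of_nonneg ht.le]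
      exact sq_abs_logDampedProfile_le hμ.le hμ' ht.le (norm_nonneg ξ)
        (mem_closedBall_zero_iff.1 hξ)
    _ = K ^ 2 * (∫ x, Real.exp (-(μ / 2 * ‖x‖)) ∂ν) * (t ^ 2 * (t ^ finrank ℝ E)⁻¹) := by
      rw [integral_const_mul]
      ring

theorem le_setIntegral_sq_abs_logDampedProfile [Nontrivial E] {ρ : ℝ} (hμ : 0 ≤ μ) (hμ' : μ < 2)
    (ht : 1 ≤ t) (hρ : 0 ≤ ρ) (hρ' : ρ ≤ 1) (hγρ : |γ| * ρ ≤ 1) :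
    (Real.exp (-(μ / 2)) * (2 / Real.pi * |γ|)) ^ 2 *
        (ρ ^ finrank ℝ E * ν.real (closedBall 0 1)) * (t ^ 2 * (t ^ finrank ℝ E)⁻¹) ≤
      ∫ ξ in closedBall (0 : E) 1, |logDampedProfile μ γ t ‖ξ‖| ^ 2 ∂ν := by
  have ht₀ : 0 < t := one_pos.trans_le ht
  have h_radius : ρ / t ≤ 1 := (div_le_self hρ ht).trans hρ'
  have h_profile : ∀ ξ : E, ξ ≠ 0 → ‖ξ‖ ≤ ρ / t →
      (Real.exp (-(μ / 2)) * (2 / Real.pi * |γ| * t)) ^ 2 ≤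
        |logDampedProfile μ γ t ‖ξ‖| ^ 2 := by
    intro ξ hξ hξρ
    have h_scaled : t * ‖ξ‖ ≤ ρ := (le_div_iff₀' ht₀).1 hξρ
    exact le_sq_abs_logDampedProfile hμ hμ' ht₀.le (norm_pos_iff.2 hξ) (h_scaled.trans hρ')
      ((mul_le_mul_of_nonneg_left h_scaled (abs_nonneg γ)).trans hγρ)
  refine le_of_eq_of_le ?_ (mul_pow_mul_measureReal_le_setIntegral_closedBall ν (by positivity)
    h_radius (integrableOn_sq_abs_logDampedProfile ν γ hμ hμ' ht₀.le) (fun _ ↦ by positivity)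
    h_profile)
  rw [div_pow]
  ring

theorem stmt12_general [Nontrivial E] {γ : ℝ} (hγ : γ ≠ 0) (hμ : μ ∈ Set.Ioo (0 : ℝ) 2) :
    ∃ C D t₀ : ℝ, 0 < C ∧ 0 < D ∧ 0 < t₀ ∧ ∀ t : ℝ, t₀ ≤ t →
      C * t ^ ((2 : ℝ) - finrank ℝ E) ≤
        (∫ ξ in closedBall (0 : E) 1, |logDampedProfile μ γ t ‖ξ‖| ^ 2 ∂ν) ∧
      (∫ ξ in closedBall (0 : E) 1, |logDampedProfile μ γ t ‖ξ‖| ^ 2 ∂ν) ≤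
        D * t ^ ((2 : ℝ) - finrank ℝ E) := by
  obtain ⟨hμ₀, hμ₂⟩ := hμ
  have hγ₀ : 0 < |γ| := abs_pos.2 hγ
  have hκ := sqrt_one_sub_sq_div_four_pos hμ₀.le hμ₂
  have h_volume : 0 < ν.real (closedBall (0 : E) 1) :=
    ENNReal.toReal_pos (measure_closedBall_pos ν _ one_pos).ne' measure_closedBall_lt_top.ne
  have h_integral : 0 < ∫ x : E, Real.exp (-(μ / 2 * ‖x‖)) ∂ν :=
    integral_exp_pos (integrable_exp_neg_mul_norm ν (half_pos hμ₀))
  set ρ := min 1 |γ|⁻¹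
  have hρ : 0 < ρ := by positivity
  have hγρ : |γ| * ρ ≤ 1 := (le_inv_mul_iff₀ hγ₀).1 (by simp [ρ])
  refine ⟨(Real.exp (-(μ / 2)) * (2 / Real.pi * |γ|)) ^ 2 *
      (ρ ^ finrank ℝ E * ν.real (closedBall 0 1)),
    (|γ| / √(1 - μ ^ 2 / 4)) ^ 2 * ∫ x, Real.exp (-(μ / 2 * ‖x‖)) ∂ν, 1,
    by positivity, by positivity, one_pos, fun t ht ↦ ?_⟩
  have ht₀ : 0 < t := one_pos.trans_le ht
  rw [Real.rpow_sub ht₀, Real.rpow_natCast, Real.rpow_ofNat, div_eq_mul_inv]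
  exact ⟨le_setIntegral_sq_abs_logDampedProfile ν γ hμ₀.le hμ₂ ht hρ.le (min_le_left _ _) hγρ,
    setIntegral_sq_abs_logDampedProfile_le ν γ hμ₀ hμ₂ ht₀⟩

end ProfileIntegral

/-- Lemma 5.1: for `μ ∈ (0,2)`, the profile `χ(t,ξ) = (1+r)^{-μt/2} sin(γtr)/b(r)`
(with `r = |ξ|`) satisfies `C t^{2-n} ≤ ∫_{|ξ|≤1} |χ(t,ξ)|² dξ ≤ D t^{2-n}`. -/
theorem stmt12 (n : ℕ) (hn : 1 ≤ n) (μ : ℝ) (hμ : μ ∈ Set.Ioo (0:ℝ) 2) :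
    let b : ℝ → ℝ := fun r => Real.sqrt (r ^ 2 - μ ^ 2 / 4 * Real.log (1 + r) ^ 2)
    let γ : ℝ := Real.sqrt (4 - μ ^ 2) / 2
    let χ : ℝ → EuclideanSpace ℝ (Fin n) → ℝ := fun t ξ =>
      (1 + ‖ξ‖) ^ (-(μ * t) / 2) * (1 / b ‖ξ‖) * Real.sin (γ * t * ‖ξ‖)
    ∃ C D t₀ : ℝ, 0 < C ∧ 0 < D ∧ 0 < t₀ ∧ ∀ t : ℝ, t₀ ≤ t →
      C * t ^ ((2 : ℝ) - n) ≤
        (∫ ξ in Metric.closedBall (0 : EuclideanSpace ℝ (Fin n)) 1, |χ t ξ| ^ 2) ∧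
      (∫ ξ in Metric.closedBall (0 : EuclideanSpace ℝ (Fin n)) 1, |χ t ξ| ^ 2) ≤
        D * t ^ ((2 : ℝ) - n) := by
  have : Nonempty (Fin n) := ⟨⟨0, hn⟩⟩
  have hγ : √(4 - μ ^ 2) / 2 ≠ 0 :=
    (half_pos (Real.sqrt_pos.2 (by nlinarith [hμ.1, hμ.2]))).ne'
  simpa only [finrank_euclideanSpace_fin, logDampedProfile, logDampedFreq] using
    stmt12_general (volume : Measure (EuclideanSpace ℝ (Fin n))) hγ hμ
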